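/- Let p be an odd prime, let d and r be positive integers with d > r, let ρ₁, …, ρᵣ : ℝᵈ × ℝᵈ → ℝ be continuous functions that are symmetric (ρᵢ(x, y) = ρᵢ(y, x) for all x, y), and fix t₁, …, tᵣ with each tᵢ ∈ {1, …, (p−1)/2}. Then there exist p distinct points x₀, x₁, …, x_{p−1} in ℝᵈ, indexed by 𝔽_p, and real constants c₁, …, cᵣ (not necessarily positive) such that for each i = 1, …, r: ρᵢ(x₀, x_{tᵢ}) = ρᵢ(x_{tᵢ}, x_{2tᵢ}) = ⋯ = ρᵢ(x_{(p−1)tᵢ}, x₀) = cᵢ. -/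

import Mathlib

/-! ### Chains of finite lists -/

section Chains

variable {R V W : Type*} [CommRing R]

/-- Prepending a vertex to every list of a chain. -/
noncomputable def chainCons (a : V) : (List V →₀ R) →ₗ[R] (List V →₀ R) :=
  Finsupp.lmapDomain R R (List.cons a)

/-- The alternating sum of the faces of a list (augmented: the face of `[a]` is `[]`). -/
noncomputable def listBoundary (R : Type*) {V : Type*} [CommRing R] : List V → (List V →₀ R)
  | [] => 0
  | a :: l => Finsupp.single l 1 - chainCons a (listBoundary R l)

/-- The boundary operator on chains of lists. -/
noncomputable def chainBoundary : (List V →₀ R) →ₗ[R] (List V →₀ R) :=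
  Finsupp.linearCombination R (listBoundary R)

/-- The map on chains induced by a map on vertices. -/
noncomputable def chainMap (f : V → W) : (List V →₀ R) →ₗ[R] (List W →₀ R) :=
  Finsupp.lmapDomain R R (List.map f)

/-- The prism over a list between two vertex maps. -/
noncomputable def listPrism (R : Type*) {V W : Type*} [CommRing R] (f g : V → W) :
    List V → (List W →₀ R)
  | [] => 0
  | a :: l => Finsupp.single (f a :: g a :: l.map g) 1 - chainCons (f a) (listPrism R f g l)

/-- The prism operator between two vertex maps. -/
noncomputable def chainPrism (f g : V → W) : (List V →₀ R) →ₗ[R] (List W →₀ R) :=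
  Finsupp.linearCombination R (listPrism R f g)

@[simp] lemma chainCons_single (a : V) (l : List V) (c : R) :
    chainCons a (Finsupp.single l c) = Finsupp.single (a :: l) c := by
  simp [chainCons, Finsupp.mapDomain_single]

@[simp] lemma chainMap_single (f : V → W) (l : List V) (c : R) :
    chainMap f (Finsupp.single l c) = Finsupp.single (l.map f) c := by
  simp [chainMap, Finsupp.mapDomain_single]

@[simp] lemma chainBoundary_single (l : List V) (c : R) :
    chainBoundary (Finsupp.single l c) = c • listBoundary R l := by
  simp [chainBoundary]

@[simp] lemma chainPrism_single (f g : V → W) (l : List V) (c : R) :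
    chainPrism f g (Finsupp.single l c) = c • listPrism R f g l := by
  simp [chainPrism]

lemma chainBoundary_chainCons (a : V) (z : List V →₀ R) :
    chainBoundary (chainCons a z) = z - chainCons a (chainBoundary z) := by
  induction z using Finsupp.induction_linear with
  | zero => simp
  | add x y hx hy => simp only [map_add, hx, hy]; abel
  | single l c => simp [listBoundary, smul_sub]

lemma chainBoundary_listBoundary (l : List V) : chainBoundary (listBoundary R l) = 0 := by
  induction l with
  | nil => simp [listBoundary]
  | cons a l ih => simp [listBoundary, chainBoundary_chainCons, ih]

lemma chainMap_chainCons (f : V → W) (a : V) (z : List V →₀ R) :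
    chainMap f (chainCons a z) = chainCons (f a) (chainMap f z) := by
  induction z using Finsupp.induction_linear with
  | zero => simp
  | add x y hx hy => simp [hx, hy]
  | single l c => simp

lemma chainMap_listBoundary (f : V → W) (l : List V) :
    chainMap f (listBoundary R l) = listBoundary R (l.map f) := by
  induction l with
  | nil => simp [listBoundary]
  | cons a l ih => simp [listBoundary, chainMap_chainCons, ih]

lemma chainBoundary_chainMap (f : V → W) (z : List V →₀ R) :
    chainBoundary (chainMap f z) = chainMap f (chainBoundary z) := by
  induction z using Finsupp.induction_linear with
  | zero => simp
  | add x y hx hy => simp [hx, hy]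
  | single l c => simp [chainMap_listBoundary]

lemma chainPrism_chainCons (f g : V → W) (a : V) (z : List V →₀ R) :
    chainPrism f g (chainCons a z) =
      chainCons (f a) (chainCons (g a) (chainMap g z)) - chainCons (f a) (chainPrism f g z) := by
  induction z using Finsupp.induction_linear with
  | zero => simp
  | add x y hx hy => simp only [map_add, hx, hy]; abel
  | single l c => simp [listPrism, smul_sub]

lemma chainBoundary_listPrism (f g : V → W) (l : List V) :
    chainBoundary (listPrism R f g l) + chainPrism f g (listBoundary R l) =
      Finsupp.single (l.map g) 1 - Finsupp.single (l.map f) 1 := by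
  induction l with
  | nil => simp [listPrism, listBoundary]
  | cons a l ih =>
    have ih' : chainBoundary (listPrism R f g l) =
      Finsupp.single (l.map g) 1 - Finsupp.single (l.map f) 1 -
        chainPrism f g (listBoundary R l) := by rw [← ih]; abel
    simp only [listPrism, listBoundary, map_sub, chainBoundary_single, one_smul,
      chainBoundary_chainCons, chainPrism_single, chainPrism_chainCons, ih', chainCons_single,
      List.map_cons, chainMap_listBoundary]
    abel

lemma chainBoundary_chainPrism (f g : V → W) (z : List V →₀ R) :
    chainBoundary (chainPrism f g z) =
      chainMap g z - chainMap f z - chainPrism f g (chainBoundary z) := by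
  induction z using Finsupp.induction_linear with
  | zero => simp
  | add x y hx hy => simp only [map_add, hx, hy]; abel
  | single l c =>
    have := chainBoundary_listPrism (R := R) f g l
    rw [← eq_sub_iff_add_eq] at this
    simp [this, smul_sub]

lemma chainMap_chainMap {U : Type*} (f : V → W) (g : W → U) (z : List V →₀ R) :
    chainMap g (chainMap f z) = chainMap (g ∘ f) z := by
  induction z using Finsupp.induction_linear with
  | zero => simp
  | add x y hx hy => simp [hx, hy]
  | single l c => simp

lemma chainMap_id (z : List V →₀ R) : chainMap id z = z := by
  induction z using Finsupp.induction_linear with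
  | zero => simp
  | add x y hx hy => simp [hx, hy]
  | single l c => simp

/-- A linear map out of a free module preserves supports as soon as it does so on the basis. -/
lemma map_mem_supported {α β : Type*} (F : (α →₀ R) →ₗ[R] (β →₀ R)) {S : Set α} {T : Set β}
    (h : ∀ a ∈ S, F (Finsupp.single a 1) ∈ Finsupp.supported R R T) {z : α →₀ R}
    (hz : z ∈ Finsupp.supported R R S) : F z ∈ Finsupp.supported R R T := by
  rw [Finsupp.supported_eq_span_single] at hz
  induction hz using Submodule.span_induction with
  | mem x hx => obtain ⟨a, ha, rfl⟩ := hx; exact h a ha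
  | zero => simp
  | add x y _ _ hx hy => rw [map_add]; exact add_mem hx hy
  | smul c x _ hx => rw [map_smul]; exact Submodule.smul_mem _ _ hx

/-- Linear maps that agree on basis vectors indexed by `S` agree on elements supported in `S`. -/
lemma eq_of_mem_supported {α M : Type*} [AddCommGroup M] [Module R M]
    (F G : (α →₀ R) →ₗ[R] M) {S : Set α}
    (h : ∀ a ∈ S, F (Finsupp.single a 1) = G (Finsupp.single a 1)) {z : α →₀ R}
    (hz : z ∈ Finsupp.supported R R S) : F z = G z := by
  rw [Finsupp.supported_eq_span_single] at hz
  induction hz using Submodule.span_induction with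
  | mem x hx => obtain ⟨a, ha, rfl⟩ := hx; exact h a ha
  | zero => simp
  | add x y _ _ hx hy => rw [map_add, map_add, hx, hy]
  | smul c x _ hx => rw [map_smul, map_smul, hx]

lemma chainMap_mem_supported (f : V → W) {S : Set (List V)} {T : Set (List W)}
    (h : ∀ l ∈ S, l.map f ∈ T) {z : List V →₀ R} (hz : z ∈ Finsupp.supported R R S) :
    chainMap f z ∈ Finsupp.supported R R T :=
  map_mem_supported _ (fun l hl => by
    rw [chainMap_single]; exact Finsupp.single_mem_supported R _ (h l hl)) hz

lemma chainCons_mem_supported (a : V) {S T : Set (List V)}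
    (h : ∀ l ∈ S, a :: l ∈ T) {z : List V →₀ R} (hz : z ∈ Finsupp.supported R R S) :
    chainCons a z ∈ Finsupp.supported R R T :=
  map_mem_supported _ (fun l hl => by
    rw [chainCons_single]; exact Finsupp.single_mem_supported R _ (h l hl)) hz

lemma listBoundary_mem_supported (l : List V) :
    listBoundary R l ∈ Finsupp.supported R R {m | m.length + 1 = l.length ∧ m ⊆ l} := by
  induction l with
  | nil => simp [listBoundary]
  | cons a l ih =>
    refine sub_mem (Finsupp.single_mem_supported R _ (by simp)) ?_
    refine chainCons_mem_supported a (fun m hm => ?_) ih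
    simp only [Set.mem_ofPred_eq, List.length_cons] at hm ⊢
    exact ⟨by omega, List.cons_subset_cons a hm.2⟩

lemma listPrism_mem_supported (f g : V → W) (l : List V) :
    listPrism R f g l ∈ Finsupp.supported R R
      {m | m.length = l.length + 1 ∧ ∀ x ∈ m, ∃ a ∈ l, x = f a ∨ x = g a} := by
  induction l with
  | nil => simp [listPrism]
  | cons a l ih =>
    refine sub_mem (Finsupp.single_mem_supported R _ ?_) ?_
    · refine ⟨by simp, fun x hx => ?_⟩
      simp only [List.mem_cons, List.mem_map] at hx ⊢
      rcases hx with rfl | rfl | ⟨b, hb, rfl⟩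
      · exact ⟨a, by simp⟩
      · exact ⟨a, by simp⟩
      · exact ⟨b, by simp [hb]⟩
    · refine chainCons_mem_supported _ (fun m hm => ?_) ih
      refine ⟨by simp [hm.1], fun x hx => ?_⟩
      simp only [List.mem_cons] at hx ⊢
      rcases hx with rfl | hx
      · exact ⟨a, by simp⟩
      · obtain ⟨b, hb, h⟩ := hm.2 x hx
        exact ⟨b, .inr hb, h⟩

end Chains

/-! ### Alternating cochains on lists of coloured labels -/

section Cochains

open Finset

variable {n p : ℕ}

/-- Translation of the second coordinate of a coloured label. -/
def labelShift (t : ZMod p) (v : Fin n × ZMod p) : Fin n × ZMod p := (v.1, v.2 + t)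

/-- A list of coloured labels in which each colour carries at most one label. -/
def ColourInjective (l : List (Fin n × ZMod p)) : Prop :=
  ∀ x ∈ l, ∀ y ∈ l, x.1 = y.1 → x = y

/-- Antisymmetry under transposition of adjacent vertices, for colour-injective lists. -/
def IsAlternatingCochain (φ : List (Fin n × ZMod p) → ZMod p) : Prop :=
  ∀ u a b v, ColourInjective (u ++ a :: b :: v) → φ (u ++ a :: b :: v) = -φ (u ++ b :: a :: v)

lemma ColourInjective.mono {l m : List (Fin n × ZMod p)} (hl : ColourInjective l)
    (h : m ⊆ l) : ColourInjective m :=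
  fun x hx y hy => hl x (h hx) y (h hy)

lemma labelShift_labelShift (s t : ZMod p) (v : Fin n × ZMod p) :
    labelShift s (labelShift t v) = labelShift (t + s) v := by
  simp [labelShift, add_assoc]

lemma map_labelShift_labelShift (s t : ZMod p) (l : List (Fin n × ZMod p)) :
    (l.map (labelShift t)).map (labelShift s) = l.map (labelShift (t + s)) := by
  rw [List.map_map]; congr 1; funext v; exact labelShift_labelShift s t v

lemma map_labelShift_zero (l : List (Fin n × ZMod p)) : l.map (labelShift 0) = l := by
  have : (labelShift 0 : Fin n × ZMod p → Fin n × ZMod p) = id := by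
    funext v; simp [labelShift]
  simp [this]

lemma ColourInjective.map_labelShift {l : List (Fin n × ZMod p)} (hl : ColourInjective l)
    (t : ZMod p) : ColourInjective (l.map (labelShift t)) := by
  intro x hx y hy hxy
  obtain ⟨a, ha, rfl⟩ := List.mem_map.1 hx
  obtain ⟨b, hb, rfl⟩ := List.mem_map.1 hy
  rw [hl a ha b hb hxy]

open Classical in
/-- The label carried by the least colour occurring in a set. -/
noncomputable def leastColourLabel (S : Set (Fin n × ZMod p)) : ZMod p :=
  if h : ∃ v ∈ S, ∀ u ∈ S, v.1 ≤ u.1 then h.choose.2 else 0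

lemma leastColourLabel_eq {l : List (Fin n × ZMod p)} (hl : ColourInjective l)
    {v : Fin n × ZMod p} (hv : v ∈ l) (hmin : ∀ u ∈ l, v.1 ≤ u.1) :
    leastColourLabel {x | x ∈ l} = v.2 := by
  have h : ∃ v ∈ {x | x ∈ l}, ∀ u ∈ {x | x ∈ l}, v.1 ≤ u.1 := ⟨v, hv, hmin⟩
  rw [leastColourLabel, dif_pos h]
  obtain ⟨h1, h2⟩ := h.choose_spec
  rw [hl _ h1 v hv (le_antisymm (h2 v hv) (hmin _ h1))]

lemma leastColourLabel_map {l : List (Fin n × ZMod p)} (hl : ColourInjective l) (h0 : l ≠ [])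
    (t : ZMod p) :
    leastColourLabel {x | x ∈ l.map (labelShift t)} = leastColourLabel {x | x ∈ l} + t := by
  obtain ⟨v, hv, hmin⟩ := Set.exists_min_image {x | x ∈ l} Prod.fst (List.finite_toSet l)
    (by obtain ⟨a, ha⟩ := List.exists_mem_of_ne_nil l h0; exact ⟨a, ha⟩)
  rw [leastColourLabel_eq hl hv hmin, leastColourLabel_eq (hl.map_labelShift t)
    (List.mem_map_of_mem (f := labelShift t) hv)]
  · rfl
  · intro u hu
    obtain ⟨w, hw, rfl⟩ := List.mem_map.1 hu
    exact hmin w hw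

lemma IsAlternatingCochain.eq_zero_iff_of_perm {φ : List (Fin n × ZMod p) → ZMod p}
    (hφ : IsAlternatingCochain φ) {l m : List (Fin n × ZMod p)} (h : l.Perm m) :
    ∀ u, ColourInjective (u ++ l) → (φ (u ++ l) = 0 ↔ φ (u ++ m) = 0) := by
  induction h with
  | nil => intro u _; rfl
  | cons x h ih =>
    intro u hu
    have := ih (u ++ [x]) (by simpa using hu)
    simpa using this
  | swap x y l =>
    intro u hu
    rw [hφ u y x l hu, neg_eq_zero]
  | trans h1 h2 ih1 ih2 =>
    intro u hu
    rw [ih1 u hu]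
    exact ih2 u (hu.mono ((h1.append_left u).symm.subset))

lemma IsAlternatingCochain.eq_zero_of_length [Fact p.Prime] (hodd : Odd p)
    {φ : List (Fin n × ZMod p) → ZMod p}
    (hφ : IsAlternatingCochain φ) {l : List (Fin n × ZMod p)} (hl : ColourInjective l)
    (hlen : n < l.length) : φ l = 0 := by
  have hdup : ¬ l.Nodup := by
    intro hnd
    have h1 : (l.map Prod.fst).Nodup := by
      refine List.Nodup.map_on (fun x hx y hy h => hl x hx y hy h) hnd
    have := h1.length_le_card
    simp at this
    omega
  obtain ⟨x, hx⟩ := List.exists_duplicate_iff_not_nodup.2 hdup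
  obtain ⟨m, hm⟩ := (List.duplicate_iff_sublist.1 hx).exists_perm_append
  have h2 := hφ.eq_zero_iff_of_perm hm [] (by simpa using hl)
  simp only [List.nil_append, List.cons_append] at h2
  rw [h2]
  have h3 := hφ [] x x m (hl.mono hm.symm.subset)
  simp only [List.nil_append] at h3
  have h4 : (2 : ZMod p) * φ (x :: x :: m) = 0 := by linear_combination h3
  rcases mul_eq_zero.1 h4 with h | h
  · exfalso
    have : ((2 : ℕ) : ZMod p) = 0 := by exact_mod_cast h
    rw [ZMod.natCast_eq_zero_iff] at this
    have hp := (Nat.prime_dvd_prime_iff_eq Fact.out Nat.prime_two).1 this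
    subst hp
    exact absurd hodd (by decide)
  · exact h

/-- The coboundary of a cochain. -/
noncomputable def coboundary (θ : List (Fin n × ZMod p) → ZMod p) (l : List (Fin n × ZMod p)) :
    ZMod p :=
  Finsupp.linearCombination (ZMod p) θ (listBoundary (ZMod p) l)

lemma linearCombination_coboundary (θ : List (Fin n × ZMod p) → ZMod p)
    (z : List (Fin n × ZMod p) →₀ ZMod p) :
    Finsupp.linearCombination (ZMod p) (coboundary θ) z =
      Finsupp.linearCombination (ZMod p) θ (chainBoundary z) := by
  induction z using Finsupp.induction_linear with
  | zero => simp
  | add x y hx hy => simp only [map_add, hx, hy]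
  | single l c => simp [coboundary]

lemma linearCombination_chainMap {V W : Type*} (f : V → W) (θ : List W → ZMod p)
    (z : List V →₀ ZMod p) :
    Finsupp.linearCombination (ZMod p) θ (chainMap f z) =
      Finsupp.linearCombination (ZMod p) (fun l => θ (l.map f)) z := by
  induction z using Finsupp.induction_linear with
  | zero => simp
  | add x y hx hy => simp only [map_add, hx, hy]
  | single l c => simp

/-- The span of the symmetrised lists in `a, b` whose vertices lie in `T`. -/
noncomputable def swapSpan (T : Set (Fin n × ZMod p)) (a b : Fin n × ZMod p) :
    Submodule (ZMod p) (List (Fin n × ZMod p) →₀ ZMod p) :=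
  Submodule.span _ {z | ∃ u v, (∀ x ∈ u ++ a :: b :: v, x ∈ T) ∧
    z = Finsupp.single (u ++ a :: b :: v) 1 + Finsupp.single (u ++ b :: a :: v) 1}

lemma chainCons_mem_swapSpan {T : Set (Fin n × ZMod p)} {a b x : Fin n × ZMod p} (hx : x ∈ T)
    {z : List (Fin n × ZMod p) →₀ ZMod p} (hz : z ∈ swapSpan T a b) :
    chainCons x z ∈ swapSpan T a b := by
  induction hz using Submodule.span_induction with
  | mem z h =>
    obtain ⟨u, v, h, rfl⟩ := h
    refine Submodule.subset_span ⟨x :: u, v, ?_, by simp⟩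
    intro y hy
    rw [List.cons_append, List.mem_cons] at hy
    rcases hy with rfl | hy
    · exact hx
    · exact h y hy
  | zero => simp
  | add x y _ _ hx hy => rw [map_add]; exact add_mem hx hy
  | smul c x _ hx => rw [map_smul]; exact Submodule.smul_mem _ _ hx

lemma listBoundary_add_swap_mem {T : Set (Fin n × ZMod p)} {a b : Fin n × ZMod p}
    (v : List (Fin n × ZMod p)) (u : List (Fin n × ZMod p))
    (hT : ∀ x ∈ u ++ a :: b :: v, x ∈ T) :
    listBoundary (ZMod p) (u ++ a :: b :: v) + listBoundary (ZMod p) (u ++ b :: a :: v)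
      ∈ swapSpan T a b := by
  induction u with
  | nil =>
    have ha : a ∈ T := hT a (by simp)
    have hb : b ∈ T := hT b (by simp)
    have key : ∀ z ∈ Finsupp.supported (ZMod p) (ZMod p)
        {m : List (Fin n × ZMod p) | m.length + 1 = v.length ∧ m ⊆ v},
        chainCons a (chainCons b z) + chainCons b (chainCons a z) ∈ swapSpan T a b := by
      intro z hz
      rw [Finsupp.supported_eq_span_single] at hz
      induction hz using Submodule.span_induction with
      | mem z h =>
        obtain ⟨m, hm, rfl⟩ := h
        refine Submodule.subset_span ⟨[], m, ?_, by simp⟩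
        intro y hy
        simp only [List.nil_append, List.mem_cons] at hy
        rcases hy with rfl | rfl | hy
        · exact ha
        · exact hb
        · exact hT y (by simp [hm.2 hy])
      | zero => simp
      | add x y _ _ hx hy =>
        have := add_mem hx hy
        simp only [map_add]
        convert this using 1
        abel
      | smul c x _ hx =>
        simp only [map_smul]
        rw [← smul_add]
        exact Submodule.smul_mem _ _ hx
    convert key _ (listBoundary_mem_supported v) using 1
    simp only [List.nil_append, listBoundary, map_sub, chainCons_single]
    abel
  | cons x u ih =>
    have hx : x ∈ T := hT x (by simp)
    have h1 := ih (fun y hy => hT y (by rw [List.cons_append]; exact List.mem_cons_of_mem _ hy))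
    have h2 : (Finsupp.single (u ++ a :: b :: v) 1 + Finsupp.single (u ++ b :: a :: v) 1 :
        List (Fin n × ZMod p) →₀ ZMod p) ∈ swapSpan T a b :=
      Submodule.subset_span ⟨u, v, fun y hy =>
        hT y (by rw [List.cons_append]; exact List.mem_cons_of_mem _ hy), rfl⟩
    convert sub_mem h2 (chainCons_mem_swapSpan hx h1) using 1
    simp only [List.cons_append, listBoundary, map_add]
    abel

lemma IsAlternatingCochain.coboundary {θ : List (Fin n × ZMod p) → ZMod p}
    (hθ : IsAlternatingCochain θ) : IsAlternatingCochain (coboundary θ) := by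
  intro u a b v hl
  rw [eq_neg_iff_add_eq_zero, _root_.coboundary, _root_.coboundary, ← map_add]
  have h := listBoundary_add_swap_mem (T := {x | x ∈ u ++ a :: b :: v}) v u (fun x hx => hx)
  generalize listBoundary (ZMod p) (u ++ a :: b :: v) +
    listBoundary (ZMod p) (u ++ b :: a :: v) = z at h
  induction h using Submodule.span_induction with
  | mem z h =>
    obtain ⟨u', v', h, rfl⟩ := h
    have := hθ u' a b v' (hl.mono h)
    simp [this]
  | zero => simp
  | add x y _ _ hx hy => rw [map_add, hx, hy, add_zero]
  | smul c x _ hx => rw [map_smul, hx, smul_zero]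

/-- Cochains representing the generators of the cohomology of the cyclic group of order `p`:
alternating cocycles that are invariant in odd degrees and killed by the norm in even degrees. -/
structure IsCyclicCocycle (k : ℕ) (φ : List (Fin n × ZMod p) → ZMod p) : Prop where
  alternating : IsAlternatingCochain φ
  nil : φ [] = 0
  cocycle : ∀ l, ColourInjective l → coboundary φ l = 0
  even : Even k → ∀ l, ColourInjective l →
    ∑ j ∈ range p, φ (l.map (labelShift (j : ZMod p))) = 0
  odd : Odd k → ∀ l, ColourInjective l → φ (l.map (labelShift 1)) = φ l

lemma isCyclicCocycle_zero :
    IsCyclicCocycle (n := n) (p := p) 0 (fun l => if l.length = 1 then 1 else 0) where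
  alternating u a b v _ := by
    have h1 : (u ++ a :: b :: v).length ≠ 1 := by simp; omega
    have h2 : (u ++ b :: a :: v).length ≠ 1 := by simp; omega
    beta_reduce
    rw [if_neg h1, if_neg h2, neg_zero]
  nil := by simp
  cocycle l _ := by
    match l with
    | [] => simp [coboundary, listBoundary]
    | [a] => simp [coboundary, listBoundary]
    | [a, b] => simp [coboundary, listBoundary]
    | a :: b :: c :: l =>
      rw [coboundary, eq_of_mem_supported _ 0 ?_ (listBoundary_mem_supported _)]
      · simp
      · intro m hm
        have : m.length ≠ 1 := by have := hm.1; simp at this; omega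
        simp [this]
  even _ l _ := by simp
  odd h := by simp at h

lemma linearCombination_listBoundary_congr {ψ : List (Fin n × ZMod p) → ZMod p}
    {l : List (Fin n × ZMod p)} (hl : ColourInjective l)
    {χ : List (Fin n × ZMod p) → ZMod p} (h : ∀ m, ColourInjective m → ψ m = χ m) :
    Finsupp.linearCombination (ZMod p) ψ (listBoundary (ZMod p) l) =
      Finsupp.linearCombination (ZMod p) χ (listBoundary (ZMod p) l) := by
  refine eq_of_mem_supported _ _ (fun m hm => ?_) (listBoundary_mem_supported l)
  simp [h m (hl.mono hm.2)]

lemma coboundary_map (θ : List (Fin n × ZMod p) → ZMod p) (t : ZMod p)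
    (l : List (Fin n × ZMod p)) :
    coboundary θ (l.map (labelShift t)) =
      Finsupp.linearCombination (ZMod p) (fun m => θ (m.map (labelShift t)))
        (listBoundary (ZMod p) l) := by
  rw [coboundary, ← chainMap_listBoundary, linearCombination_chainMap]

lemma coboundary_coboundary (θ : List (Fin n × ZMod p) → ZMod p) (l : List (Fin n × ZMod p)) :
    coboundary (coboundary θ) l = 0 := by
  rw [coboundary, linearCombination_coboundary, chainBoundary_listBoundary, map_zero]

lemma IsCyclicCocycle.exists_of_even [Fact p.Prime] {k : ℕ} (hk : Even k)
    {φ : List (Fin n × ZMod p) → ZMod p} (hφ : IsCyclicCocycle k φ) :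
    ∃ θ : List (Fin n × ZMod p) → ZMod p, IsCyclicCocycle (k + 1) (coboundary θ) ∧
      ∀ l, ColourInjective l → θ (l.map (labelShift 1)) - θ l = φ l := by
  set lab : List (Fin n × ZMod p) → ZMod p := fun l => leastColourLabel {x | x ∈ l} with hlab
  set θ : List (Fin n × ZMod p) → ZMod p := fun l =>
    if l = [] then 0 else ∑ j ∈ range (lab l).val, φ (l.map (labelShift ((j : ZMod p) - lab l)))
    with hθ
  have hdiff : ∀ l, ColourInjective l → θ (l.map (labelShift 1)) - θ l = φ l := by
    intro l hl
    by_cases h0 : l = []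
    · simp [hθ, h0, hφ.nil]
    have hl1 : lab (l.map (labelShift 1)) = lab l + 1 := leastColourLabel_map hl h0 1
    simp only [hθ, List.map_eq_nil_iff, h0, if_false, hl1, map_labelShift_labelShift]
    have hs : ∀ j : ℕ, (1 + ((j : ZMod p) - (lab l + 1))) = (j : ZMod p) - lab l := by
      intro j; ring
    simp only [hs]
    by_cases hv : (lab l).val + 1 < p
    · have : (lab l + 1).val = (lab l).val + 1 := by
        have h1 : lab l + 1 = (((lab l).val + 1 : ℕ) : ZMod p) := by simp
        rw [h1, ZMod.val_natCast_of_lt hv]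
      rw [this, sum_range_succ]
      simp [map_labelShift_zero]
    · have hlt := ZMod.val_lt (lab l)
      have hv' : (lab l).val + 1 = p := by omega
      have h1 : lab l + 1 = 0 := by
        have : (((lab l).val + 1 : ℕ) : ZMod p) = 0 := by rw [hv']; simp
        simpa using this
      have h2 := hφ.even hk _ (hl.map_labelShift (- lab l))
      simp only [map_labelShift_labelShift] at h2
      rw [show range p = range ((lab l).val + 1) by rw [hv'], sum_range_succ] at h2
      have h3 : - lab l + (((lab l).val : ℕ) : ZMod p) = 0 := by simp
      rw [h3, map_labelShift_zero] at h2
      rw [h1]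
      simp only [ZMod.val_zero, range_zero, sum_empty, zero_sub]
      have h4 : ∀ j : ℕ, (j : ZMod p) - lab l = - lab l + j := fun j => by ring
      simp only [h4]
      linear_combination -h2
  have halt : IsAlternatingCochain θ := by
    intro u a b v hl
    have h1 : lab (u ++ b :: a :: v) = lab (u ++ a :: b :: v) := by
      simp only [hlab]; congr 1; ext x; simp; tauto
    simp only [hθ, h1]
    simp only [List.append_eq_nil_iff, reduceCtorEq, and_false, if_false, ← sum_neg_distrib]
    refine sum_congr rfl fun j _ => ?_
    have := hφ.alternating (u.map (labelShift ((j : ZMod p) - lab (u ++ a :: b :: v))))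
      (labelShift ((j : ZMod p) - lab (u ++ a :: b :: v)) a)
      (labelShift ((j : ZMod p) - lab (u ++ a :: b :: v)) b)
      (v.map (labelShift ((j : ZMod p) - lab (u ++ a :: b :: v))))
      (by simpa using hl.map_labelShift ((j : ZMod p) - lab (u ++ a :: b :: v)))
    simpa using this
  refine ⟨θ, ⟨halt.coboundary, by simp [coboundary, listBoundary],
    fun l _ => coboundary_coboundary θ l, fun h => ?_, fun _ l hl => ?_⟩, hdiff⟩
  · exact absurd hk (by simpa [Nat.even_add_one] using h)
  · have h1 := linearCombination_listBoundary_congr hl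
      (ψ := fun m => θ (m.map (labelShift 1))) (χ := θ + φ)
      (fun m hm => by rw [Pi.add_apply, ← hdiff m hm]; ring)
    rw [coboundary_map, h1]
    have h2 : Finsupp.linearCombination (ZMod p) (θ + φ) (listBoundary (ZMod p) l) =
        coboundary θ l + coboundary φ l := by
      simp [coboundary, Finsupp.linearCombination_apply, Finsupp.sum, mul_add, sum_add_distrib]
    rw [h2, hφ.cocycle l hl, add_zero]

lemma IsCyclicCocycle.exists_of_odd [Fact p.Prime] {k : ℕ} (hk : Odd k)
    {φ : List (Fin n × ZMod p) → ZMod p} (hφ : IsCyclicCocycle k φ) :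
    ∃ θ : List (Fin n × ZMod p) → ZMod p, IsCyclicCocycle (k + 1) (coboundary θ) ∧
      ∀ l, ColourInjective l → ∑ j ∈ range p, θ (l.map (labelShift (j : ZMod p))) = φ l := by
  set lab : List (Fin n × ZMod p) → ZMod p := fun l => leastColourLabel {x | x ∈ l} with hlab
  set θ : List (Fin n × ZMod p) → ZMod p := fun l => if lab l = 0 then φ l else 0 with hθ
  have hinv : ∀ (j : ℕ) l, ColourInjective l → φ (l.map (labelShift (j : ZMod p))) = φ l := by
    intro j l hl
    induction j with
    | zero => simp [map_labelShift_zero]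
    | succ j ih =>
      rw [← ih, ← hφ.odd hk _ (hl.map_labelShift (j : ZMod p)), map_labelShift_labelShift]
      simp
  have hsum : ∀ l, ColourInjective l →
      ∑ j ∈ range p, θ (l.map (labelShift (j : ZMod p))) = φ l := by
    intro l hl
    by_cases h0 : l = []
    · simp [hθ, h0, hφ.nil]
    rw [sum_eq_single (- lab l).val]
    · have : lab (l.map (labelShift (- lab l))) = 0 := by
        simp only [hlab]; rw [leastColourLabel_map hl h0]; ring
      simp only [ZMod.natCast_zmod_val, hθ, this, if_true]
      have := hinv (- lab l).val l hl
      simpa using this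
    · intro j hj hne
      have h1 : lab (l.map (labelShift (j : ZMod p))) = lab l + j := leastColourLabel_map hl h0 _
      simp only [hθ, h1]
      rw [if_neg]
      intro h2
      apply hne
      rw [neg_eq_of_add_eq_zero_right h2, ZMod.val_natCast_of_lt (mem_range.1 hj)]
    · intro h
      exact absurd (mem_range.2 (ZMod.val_lt _)) h
  have halt : IsAlternatingCochain θ := by
    intro u a b v hl
    have h1 : lab (u ++ b :: a :: v) = lab (u ++ a :: b :: v) := by
      simp only [hlab]; congr 1; ext x; simp; tauto
    simp only [hθ, h1, hφ.alternating u a b v hl]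
    split_ifs <;> simp
  refine ⟨θ, ⟨halt.coboundary, by simp [coboundary, listBoundary],
    fun l _ => coboundary_coboundary θ l, fun _ l hl => ?_, fun h => ?_⟩, hsum⟩
  · simp only [coboundary_map]
    have h2 : ∑ j ∈ range p, Finsupp.linearCombination (ZMod p)
        (fun m => θ (m.map (labelShift (j : ZMod p)))) (listBoundary (ZMod p) l) =
        Finsupp.linearCombination (ZMod p)
        (fun m => ∑ j ∈ range p, θ (m.map (labelShift (j : ZMod p))))
          (listBoundary (ZMod p) l) := by
      simp only [Finsupp.linearCombination_apply, Finsupp.sum, smul_eq_mul, mul_sum]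
      exact sum_comm
    rw [h2, linearCombination_listBoundary_congr hl hsum]
    exact hφ.cocycle l hl
  · exact absurd hk (by simpa [Nat.odd_add_one] using h)

end Cochains

/-! ### A Borsuk-Ulam theorem for cyclic groups of prime order -/

section BorsukUlam

open Finset

/-- The two alternating differentials `s - 1` and `1 + s + ⋯ + s ^ (p - 1)` of the standard
resolution of a cyclic group of order `p`. -/
noncomputable def cyclicDiff (p : ℕ) {V : Type*} (s : V → V) (k : ℕ) :
    (List V →₀ ZMod p) →ₗ[ZMod p] (List V →₀ ZMod p) :=
  if Even k then chainMap s - LinearMap.id else ∑ j ∈ range p, chainMap (s^[j])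

lemma chainBoundary_cyclicDiff {p : ℕ} {V : Type*} (s : V → V) (k : ℕ) (z : List V →₀ ZMod p) :
    chainBoundary (cyclicDiff p s k z) = cyclicDiff p s k (chainBoundary z) := by
  unfold cyclicDiff
  split_ifs
  · simp [chainBoundary_chainMap]
  · simp [LinearMap.sum_apply, map_sum, chainBoundary_chainMap]

lemma cyclicDiff_succ_cyclicDiff {p : ℕ} {V : Type*} {s : V → V} (hs : s^[p] = id) (k : ℕ)
    (z : List V →₀ ZMod p) : cyclicDiff p s (k + 1) (cyclicDiff p s k z) = 0 := by
  have key : ∑ j ∈ range p, chainMap (s^[j + 1]) z = ∑ j ∈ range p, chainMap (s^[j]) z := by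
    rw [← sub_eq_zero, ← sum_sub_distrib,
      sum_range_sub (fun j => chainMap (s^[j]) z), hs, Function.iterate_zero, sub_self]
  unfold cyclicDiff
  by_cases hk : Even k
  · have hk' : ¬ Even (k + 1) := by simpa [Nat.even_add_one] using hk
    simp only [hk, hk', if_true, if_false, LinearMap.sum_apply, LinearMap.sub_apply,
      LinearMap.id_apply, map_sub, chainMap_chainMap, ← Function.iterate_succ]
    exact sub_eq_zero.2 key
  · have hk' : Even (k + 1) := by simpa [Nat.even_add_one] using hk
    simp only [hk, hk', if_true, if_false, LinearMap.sum_apply, LinearMap.sub_apply,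
      LinearMap.id_apply, map_sum, chainMap_chainMap, ← Function.iterate_succ']
    rw [sum_sub_distrib]
    exact sub_eq_zero.2 key

lemma cyclicDiff_mem_supported {p : ℕ} {V : Type*} {s : V → V} {S : Set (List V)}
    (hS : ∀ l ∈ S, l.map s ∈ S) (k : ℕ) {z : List V →₀ ZMod p}
    (hz : z ∈ Finsupp.supported (ZMod p) (ZMod p) S) :
    cyclicDiff p s k z ∈ Finsupp.supported (ZMod p) (ZMod p) S := by
  have hS' : ∀ (j : ℕ), ∀ l ∈ S, l.map (s^[j]) ∈ S := by
    intro j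
    induction j with
    | zero => simp
    | succ j ih =>
      intro l hl
      have := ih _ (hS l hl)
      rwa [List.map_map, ← Function.iterate_succ] at this
  unfold cyclicDiff
  split_ifs
  · exact sub_mem (chainMap_mem_supported s hS hz) hz
  · rw [LinearMap.sum_apply]
    exact sum_mem fun j _ => chainMap_mem_supported _ (hS' j) hz

/-- Lists of `m` points of `A` at mutual distance at most `δ`. -/
def smallLists {E : Type*} [Dist E] (A : Set E) (δ : ℝ) (m : ℕ) : Set (List E) :=
  {l | l.length = m ∧ (∀ x ∈ l, x ∈ A) ∧ ∀ x ∈ l, ∀ y ∈ l, dist x y ≤ δ}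

section Filling

variable {E R : Type*} [NormedAddCommGroup E] [NormedSpace ℝ E] [CommRing R]

/-- A small cycle in `A` bounds a slightly less small chain in any cone over `A`. -/
lemma exists_small_filling {A B : Set E} {w : E} {D δ τ : ℝ} {m : ℕ}
    (hB : ∀ x ∈ A, ∀ t ∈ Set.Icc (0 : ℝ) 1, AffineMap.lineMap x w t ∈ B)
    (hw : w ∈ B) (hD : ∀ x ∈ A, dist x w ≤ D) (hδ : 0 ≤ δ) (hτ : 0 < τ) {z : List E →₀ R}
    (hz : z ∈ Finsupp.supported R R (smallLists A δ m)) (hz0 : chainBoundary z = 0) :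
    ∃ y ∈ Finsupp.supported R R (smallLists B (δ + τ) (m + 1)), chainBoundary y = z := by
  obtain ⟨N, hN⟩ := exists_nat_gt (max (D / τ) 0)
  have hN0 : (0 : ℝ) < N := lt_of_le_of_lt (le_max_right _ _) hN
  have hDN : D / N ≤ τ := by
    rw [div_le_iff₀ hN0]
    have := (div_lt_iff₀ hτ).1 (lt_of_le_of_lt (le_max_left _ _) hN)
    linarith
  let h : ℕ → E → E := fun i x => AffineMap.lineMap x w ((i : ℝ) / N)
  have h0 : h 0 = id := by funext x; simp [h]
  have hN1 : h N = fun _ => w := by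
    funext x
    simp [h, div_self hN0.ne']
  have hmem : ∀ i ≤ N, ∀ x ∈ A, h i x ∈ B := fun i hi x hx =>
    hB x hx _ ⟨by positivity, by rw [div_le_one hN0]; exact_mod_cast hi⟩
  have hcontr : ∀ i ≤ N, ∀ x y, dist (h i x) (h i y) ≤ dist x y := by
    intro i hi x y
    have h1 : (0 : ℝ) ≤ (i : ℝ) / N := by positivity
    have h2 : (i : ℝ) / N ≤ 1 := by rw [div_le_one hN0]; exact_mod_cast hi
    have h3 : h i x - h i y = (1 - (i : ℝ) / N) • (x - y) := by
      simp only [h, AffineMap.lineMap_apply_module, smul_sub]; abel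
    rw [dist_eq_norm, dist_eq_norm, h3, norm_smul, Real.norm_of_nonneg (by linarith)]
    exact mul_le_of_le_one_left (norm_nonneg _) (by linarith)
  have hstep : ∀ i, ∀ x ∈ A, dist (h i x) (h (i + 1) x) ≤ τ := by
    intro i x hx
    simp only [h]
    rw [dist_lineMap_lineMap, Real.dist_eq]
    have : ((i : ℝ) / N - ((i + 1 : ℕ) : ℝ) / N) = - (1 / N) := by push_cast; ring
    rw [this, abs_neg, abs_of_pos (by positivity)]
    calc 1 / (N : ℝ) * dist x w ≤ 1 / N * D := by gcongr; exact hD x hx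
      _ = D / N := by ring
      _ ≤ τ := hDN
  have hprism : ∀ i < N, chainPrism (h i) (h (i + 1)) z ∈
      Finsupp.supported R R (smallLists B (δ + τ) (m + 1)) := by
    intro i hi
    refine map_mem_supported _ (fun l hl => ?_) hz
    rw [chainPrism_single, one_smul]
    refine Finsupp.supported_mono ?_ (listPrism_mem_supported _ _ l)
    intro q hq
    refine ⟨by rw [hq.1, hl.1], fun x hx => ?_, fun x hx y hy => ?_⟩
    · obtain ⟨a, ha, rfl | rfl⟩ := hq.2 x hx
      · exact hmem i hi.le a (hl.2.1 a ha)
      · exact hmem (i + 1) hi a (hl.2.1 a ha)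
    · obtain ⟨a, ha, hxa⟩ := hq.2 x hx
      obtain ⟨b, hb, hyb⟩ := hq.2 y hy
      have hab := hl.2.2 a ha b hb
      have c1 := hcontr i hi.le a b
      have c2 := hcontr (i + 1) hi a b
      have s1 := hstep i a (hl.2.1 a ha)
      have s2 := hstep i b (hl.2.1 b hb)
      rcases hxa with rfl | rfl <;> rcases hyb with rfl | rfl
      · linarith
      · linarith [dist_triangle (h i a) (h i b) (h (i + 1) b)]
      · linarith [dist_triangle (h (i + 1) a) (h i a) (h i b),
          dist_comm (h (i + 1) a) (h i a)]
      · linarith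
  refine ⟨chainCons w (chainMap (h N) z) - ∑ i ∈ range N, chainPrism (h i) (h (i + 1)) z,
    sub_mem ?_ (sum_mem fun i hi => hprism i (mem_range.1 hi)), ?_⟩
  · refine chainCons_mem_supported (S := smallLists {w} 0 m) w (fun l hl => ?_)
      (chainMap_mem_supported _ (fun l hl => ?_) hz)
    · have hall : ∀ x ∈ w :: l, x = w := by
        intro x hx
        rcases List.mem_cons.1 hx with rfl | hx
        · rfl
        · exact hl.2.1 x hx
      refine ⟨by simp [hl.1], fun x hx => by rw [hall x hx]; exact hw, fun x hx y hy => ?_⟩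
      rw [hall x hx, hall y hy, dist_self]
      positivity
    · rw [hN1]
      refine ⟨by simp [hl.1], by simp, by simp +contextual⟩
  · rw [map_sub, chainBoundary_chainCons, chainBoundary_chainMap, hz0, map_zero, map_zero,
      sub_zero, map_sum]
    simp only [chainBoundary_chainPrism, hz0, map_zero, sub_zero]
    rw [sum_range_sub (fun i => chainMap (h i) z), h0, chainMap_id]
    abel

end Filling

/-- **Borsuk-Ulam theorem for `ℤ/p`**, in the form of Tucker's lemma: on a space swept out by `n`
successive equivariant cones, an equivariant labelling by `n` colours and elements of `ℤ/p` takes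
arbitrarily close points to different labels of the same colour. -/
theorem exists_close_ne_label {n p : ℕ} [Fact p.Prime] (hodd : Odd p) {E : Type*}
    [NormedAddCommGroup E] [NormedSpace ℝ E] {s : E → E} (hs : s^[p] = id) (hsi : Isometry s)
    {P : ℕ → Set E} {w : ℕ → E} {D : ℝ} (hP : ∀ k ≤ n, ∀ x ∈ P k, s x ∈ P k)
    (hw : ∀ k ≤ n, w k ∈ P k)
    (hcone : ∀ k < n, ∀ x ∈ P k, ∀ t ∈ Set.Icc (0 : ℝ) 1,
      AffineMap.lineMap x (w (k + 1)) t ∈ P (k + 1))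
    (hD : ∀ k < n, ∀ x ∈ P k, dist x (w (k + 1)) ≤ D)
    {colour : E → Fin n} {label : E → ZMod p}
    (hcolour : ∀ x ∈ P n, colour (s x) = colour x)
    (hlabel : ∀ x ∈ P n, label (s x) = label x + 1) {η : ℝ} (hη : 0 < η) :
    ∃ x ∈ P n, ∃ y ∈ P n, dist x y < η ∧ colour x = colour y ∧ label x ≠ label y := by
  by_contra! hsep
  have hmono : ∀ k ≤ n, P k ⊆ P n := by
    intro k hk
    induction hk using Nat.decreasingInduction with
    | self => exact subset_rfl
    | of_succ k hk ih =>
      intro x hx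
      have := hcone k hk x hx 0 (by simp)
      rw [AffineMap.lineMap_apply_zero] at this
      exact ih this
  set τ : ℝ := η / (n + 1) with hτdef
  have hτ : 0 < τ := by positivity
  set lam : E → Fin n × ZMod p := fun x => (colour x, label x) with hlam
  have hnτ : n * τ < η := by
    rw [hτdef, mul_div_assoc', div_lt_iff₀ (by positivity)]
    nlinarith
  have hkτ : ∀ k ≤ n, (k : ℝ) * τ < η := fun k hk =>
    lt_of_le_of_lt (by gcongr) hnτ
  have hgood : ∀ k ≤ n, ∀ m, ∀ l ∈ smallLists (P k) (k * τ) m, ColourInjective (l.map lam) := by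
    intro k hk m l hl x hx y hy hxy
    obtain ⟨a, ha, rfl⟩ := List.mem_map.1 hx
    obtain ⟨b, hb, rfl⟩ := List.mem_map.1 hy
    have := hsep a (hmono k hk (hl.2.1 a ha)) b (hmono k hk (hl.2.1 b hb))
      (lt_of_le_of_lt (hl.2.2 a ha b hb) (hkτ k hk)) hxy
    exact Prod.ext hxy this
  have hshift : ∀ (j : ℕ), ∀ x ∈ P n, lam (s^[j] x) = labelShift (j : ZMod p) (lam x) := by
    intro j
    induction j with
    | zero => intro x _; simp [labelShift]
    | succ j ih =>
      intro x hx
      rw [Function.iterate_succ_apply, ih _ (hP n le_rfl x hx)]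
      simp only [hlam, labelShift, hcolour x hx, hlabel x hx]
      push_cast
      rw [add_assoc, add_comm (1 : ZMod p)]
  have hmapshift : ∀ k ≤ n, ∀ m, ∀ l ∈ smallLists (P k) (k * τ) m, ∀ j : ℕ,
      (l.map (s^[j])).map lam = (l.map lam).map (labelShift (j : ZMod p)) := by
    intro k hk m l hl j
    rw [List.map_map, List.map_map]
    exact List.map_congr_left fun x hx => hshift j x (hmono k hk (hl.2.1 x hx))
  have hsmall : ∀ k ≤ n, ∀ m, ∀ l ∈ smallLists (P k) (k * τ) m,
      l.map s ∈ smallLists (P k) (k * τ) m := by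
    intro k hk m l hl
    refine ⟨by simp [hl.1], fun x hx => ?_, fun x hx y hy => ?_⟩
    · obtain ⟨a, ha, rfl⟩ := List.mem_map.1 hx
      exact hP k hk a (hl.2.1 a ha)
    · obtain ⟨a, ha, rfl⟩ := List.mem_map.1 hx
      obtain ⟨b, hb, rfl⟩ := List.mem_map.1 hy
      rw [hsi.dist_eq]
      exact hl.2.2 a ha b hb
  have main : ∀ k ≤ n, ∃ φ : List (Fin n × ZMod p) → ZMod p, IsCyclicCocycle k φ ∧
      ∃ c ∈ Finsupp.supported (ZMod p) (ZMod p) (smallLists (P k) (k * τ) (k + 1)),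
        chainBoundary (cyclicDiff p s k c) = 0 ∧
        Finsupp.linearCombination (ZMod p) φ (chainMap lam c) = 1 := by
    intro k
    induction k with
    | zero =>
      intro _
      refine ⟨_, isCyclicCocycle_zero, Finsupp.single [w 0] 1,
        Finsupp.single_mem_supported _ _ ?_, ?_, ?_⟩
      · refine ⟨rfl, ?_, ?_⟩
        · intro x hx
          rw [List.mem_singleton.1 hx]
          exact hw 0 (Nat.zero_le _)
        · intro x hx y hy
          rw [List.mem_singleton.1 hx, List.mem_singleton.1 hy]
          simp
      · simp [cyclicDiff, listBoundary]
      · simp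
    | succ k ih =>
      intro hk
      obtain ⟨φ, hφ, c, hc, hc0, hφc⟩ := ih (by omega)
      have hk' : k ≤ n := by omega
      obtain ⟨y, hy, hyb⟩ := exists_small_filling (B := P (k + 1)) (w := w (k + 1))
        (hcone k hk) (hw (k + 1) hk) (hD k hk) (by positivity) hτ
        (cyclicDiff_mem_supported (hsmall k hk' _) k hc) hc0
      have hy' : y ∈ Finsupp.supported (ZMod p) (ZMod p)
          (smallLists (P (k + 1)) ((k + 1 : ℕ) * τ) (k + 1 + 1)) := by
        have : ((k + 1 : ℕ) : ℝ) * τ = k * τ + τ := by push_cast; ring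
        rw [this]
        exact hy
      have hycycle : chainBoundary (cyclicDiff p s (k + 1) y) = 0 := by
        rw [chainBoundary_cyclicDiff, hyb, cyclicDiff_succ_cyclicDiff hs]
      by_cases hev : Even k
      · obtain ⟨θ, hθ, hθφ⟩ := hφ.exists_of_even hev
        refine ⟨_, hθ, y, hy', hycycle, ?_⟩
        rw [linearCombination_coboundary, chainBoundary_chainMap, hyb, ← hφc]
        rw [cyclicDiff, if_pos hev]
        refine eq_of_mem_supported ((Finsupp.linearCombination (ZMod p) θ).comp
          ((chainMap lam).comp (chainMap s - LinearMap.id)))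
          ((Finsupp.linearCombination (ZMod p) φ).comp (chainMap lam)) (fun l hl => ?_) hc
        have h1 := hmapshift k hk' _ l hl 1
        have h2 := hθφ _ (hgood k hk' _ l hl)
        simp only [Function.iterate_one, Nat.cast_one] at h1
        simp [-List.map_map, h1, h2]
      · obtain ⟨θ, hθ, hθφ⟩ := hφ.exists_of_odd (Nat.not_even_iff_odd.1 hev)
        refine ⟨_, hθ, y, hy', hycycle, ?_⟩
        rw [linearCombination_coboundary, chainBoundary_chainMap, hyb, ← hφc]
        rw [cyclicDiff, if_neg hev]
        refine eq_of_mem_supported ((Finsupp.linearCombination (ZMod p) θ).comp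
          ((chainMap lam).comp (∑ j ∈ range p, chainMap (s^[j]))))
          ((Finsupp.linearCombination (ZMod p) φ).comp (chainMap lam)) (fun l hl => ?_) hc
        have h1 := hmapshift k hk' _ l hl
        have h2 := hθφ _ (hgood k hk' _ l hl)
        simp [-List.map_map, map_sum, h1, h2]
  obtain ⟨φ, hφ, c, hc, -, hφc⟩ := main n le_rfl
  have hzero := eq_of_mem_supported ((Finsupp.linearCombination (ZMod p) φ).comp (chainMap lam)) 0
    (fun l hl => by
      have := hφ.alternating.eq_zero_of_length hodd (hgood n le_rfl _ l hl)
        (by simp [hl.1])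
      simp [this]) hc
  rw [LinearMap.comp_apply, hφc] at hzero
  exact one_ne_zero hzero

end BorsukUlam

section Selection

/-- The Borsuk-Ulam theorem for a multivalued labelling, given by a relation `valid`. -/
theorem exists_close_ne_label_of_relation {n p : ℕ} [Fact p.Prime] (hodd : Odd p) {E : Type*}
    [NormedAddCommGroup E] [NormedSpace ℝ E] {s : E → E} (hs : s^[p] = id) (hsi : Isometry s)
    {P : ℕ → Set E} {w : ℕ → E} {D : ℝ} (hP : ∀ k ≤ n, ∀ x ∈ P k, s x ∈ P k)
    (hw : ∀ k ≤ n, w k ∈ P k)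
    (hcone : ∀ k < n, ∀ x ∈ P k, ∀ t ∈ Set.Icc (0 : ℝ) 1,
      AffineMap.lineMap x (w (k + 1)) t ∈ P (k + 1))
    (hD : ∀ k < n, ∀ x ∈ P k, dist x (w (k + 1)) ≤ D)
    {κ : Type*} [Fintype κ] (hκ : Fintype.card κ = n) {valid : E → κ → ZMod p → Prop}
    (hex : ∀ x ∈ P n, ∃ c g, valid x c g)
    (hequiv : ∀ x c g, valid x c g → valid (s x) c (g + 1)) {η : ℝ} (hη : 0 < η) :
    ∃ x ∈ P n, ∃ y ∈ P n, dist x y < η ∧ ∃ c g g', valid x c g ∧ valid y c g' ∧ g ≠ g' := by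
  by_contra! hsep
  have hne : Nonempty κ := let ⟨c, _⟩ := hex _ (hw n le_rfl); ⟨c⟩
  have hiter : ∀ (j : ℕ) x c g, valid x c g → valid (s^[j] x) c (g + j) := by
    intro j
    induction j with
    | zero => intro x c g h; simpa using h
    | succ j ih =>
      intro x c g h
      rw [Function.iterate_succ_apply']
      have := hequiv _ _ _ (ih x c g h)
      push_cast
      rwa [← add_assoc]
  have hiff : ∀ x c g, valid (s x) c (g + 1) ↔ valid x c g := by
    refine fun x c g => ⟨fun h => ?_, hequiv x c g⟩
    have h1 := hiter (p - 1) _ _ _ h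
    have hp : p - 1 + 1 = p := Nat.succ_pred_prime Fact.out
    rw [← Function.iterate_succ_apply, Nat.succ_eq_add_one, hp, hs, id_eq, add_assoc,
      add_comm (1 : ZMod p)] at h1
    have h2 : ((p - 1 : ℕ) : ZMod p) + 1 = 0 := by
      have : ((p - 1 + 1 : ℕ) : ZMod p) = 0 := by rw [hp]; simp
      simpa using this
    rwa [h2, add_zero] at h1
  let colour : E → κ := fun x => Classical.epsilon fun c => ∃ g, valid x c g
  let label : E → ZMod p := fun x => Classical.epsilon fun g => valid x (colour x) g
  have hspec : ∀ x ∈ P n, valid x (colour x) (label x) := fun x hx =>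
    Classical.epsilon_spec (Classical.epsilon_spec (hex x hx))
  have hcolour : ∀ x, colour (s x) = colour x := by
    intro x
    simp only [colour]
    congr 1
    funext c
    exact propext ⟨fun ⟨g, h⟩ => ⟨g - 1, (hiff x c _).1 (by simpa using h)⟩,
      fun ⟨g, h⟩ => ⟨g + 1, (hiff x c g).2 h⟩⟩
  have hlabel : ∀ x ∈ P n, label (s x) = label x + 1 := by
    intro x hx
    have h1 := hspec (s x) (hP n le_rfl x hx)
    rw [hcolour] at h1
    exact hsep _ (hP n le_rfl x hx) _ (hP n le_rfl x hx) (by simpa using hη) _ _ _ h1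
      (hequiv _ _ _ (hspec x hx))
  obtain ⟨x, hx, y, hy, hxy, hc, hl⟩ := exists_close_ne_label hodd hs hsi hP hw hcone hD
    (colour := fun x => Fintype.equivFinOfCardEq hκ (colour x)) (label := label)
    (fun x _ => by rw [hcolour]) hlabel hη
  have hc' : colour x = colour y := (Fintype.equivFinOfCardEq hκ).injective hc
  exact hl (hsep x hx y hy hxy _ _ _ (hspec x hx) (hc' ▸ hspec y hy))

end Selection

/-! ### Equivariant data on subsets and partitions of `ℤ/p` -/

section Labels

open Finset

/-- Among more consecutive intervals than given values, some interval contains no value. -/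
lemma exists_gap {ι : Type*} [Fintype ι] (v : ι → ℝ) {u : ℕ → ℝ} (hu : Monotone u) {L : ℕ}
    (hL : Fintype.card ι < L) : ∃ k < L, ∀ j, v j < u k ∨ u (k + 1) ≤ v j := by
  by_contra! h
  choose g hg using fun k : Fin L => h k k.2
  obtain ⟨a, b, hab, he⟩ := Fintype.exists_ne_map_eq_of_card_lt g
    (by simpa using hL)
  have key : ∀ a b : Fin L, a < b → g a ≠ g b := by
    intro a b hlt he
    have h1 := (hg a).2
    have h2 := (hg b).1
    have h3 : u (a + 1) ≤ u b := hu hlt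
    simp only [he] at h1
    linarith
  rcases lt_or_gt_of_ne hab with h | h
  · exact key a b h he
  · exact key b a h he.symm

lemma eq_of_gap {ι : Type*} {f f' : ι → ℝ} {ε : ℝ} {U U' : Finset ι} (hcard : U.card = U'.card)
    (hU : ∀ a ∈ U, ∀ b ∉ U, f b + ε ≤ f a) (hU' : ∀ a ∈ U', ∀ b ∉ U', f' b + ε ≤ f' a)
    (hf : ∀ a, |f a - f' a| < ε) : U = U' := by
  by_contra hne
  have h1 : ¬ U ⊆ U' := fun h => hne (eq_of_subset_of_card_le h hcard.ge)
  have h2 : ¬ U' ⊆ U := fun h => hne (eq_of_subset_of_card_le h hcard.le).symm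
  obtain ⟨a, ha, ha'⟩ := not_subset.1 h1
  obtain ⟨b, hb', hb⟩ := not_subset.1 h2
  have e1 := hU a ha b hb
  have e2 := hU' b hb' a ha'
  have e3 := (abs_lt.1 (hf a)).2
  have e4 := (abs_lt.1 (hf b)).1
  linarith

variable {p : ℕ} [Fact p.Prime]

/-- The average of a subset of `ℤ/p`. -/
def average (U : Finset (ZMod p)) : ZMod p := (∑ u ∈ U, u) * (U.card : ZMod p)⁻¹

lemma average_image_add_one {U : Finset (ZMod p)} (h0 : U.Nonempty) (h1 : U ≠ univ) :
    average (U.image (· + 1)) = average U + 1 := by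
  have hinj : Function.Injective (fun a : ZMod p => a + 1) := add_left_injective 1
  have hlt : U.card < p := by
    have := card_lt_univ_of_notMem
      (not_forall.1 fun h => h1 (eq_univ_iff_forall.2 h)).choose_spec
    rwa [ZMod.card] at this
  have hne : (U.card : ZMod p) ≠ 0 := by
    rw [Ne, ZMod.natCast_eq_zero_iff]
    exact Nat.not_dvd_of_pos_of_lt h0.card_pos hlt
  rw [average, average, sum_image hinj.injOn, card_image_of_injective _ hinj, sum_add_distrib]
  simp only [sum_const, nsmul_eq_mul, mul_one, add_mul]
  rw [mul_inv_cancel₀ hne]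

open Classical in
/-- The size of the class of an element. -/
noncomputable def classSize (S : Setoid (ZMod p)) (j : ZMod p) : ℕ := #{i | S j i}

open Classical in
/-- The union of the classes of least size. -/
noncomputable def smallestClasses (S : Setoid (ZMod p)) : Finset (ZMod p) :=
  {j | ∀ i, classSize S j ≤ classSize S i}

lemma smallestClasses_nonempty (S : Setoid (ZMod p)) : (smallestClasses S).Nonempty := by
  obtain ⟨j, -, hj⟩ := exists_min_image univ (classSize S) univ_nonempty
  exact ⟨j, by simpa [smallestClasses] using hj⟩

lemma smallestClasses_ne_univ {S : Setoid (ZMod p)} (h1 : Nat.card (Quotient S) ≠ 1)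
    (h2 : Nat.card (Quotient S) ≠ p) : smallestClasses S ≠ univ := by
  classical
  intro h
  have hall : ∀ i, classSize S i = classSize S 0 := by
    intro i
    have hi : i ∈ smallestClasses S := h ▸ mem_univ i
    have h0 : (0 : ZMod p) ∈ smallestClasses S := h ▸ mem_univ 0
    simp only [smallestClasses, mem_filter, mem_univ, true_and] at hi h0
    exact le_antisymm (hi 0) (h0 i)
  have hsum := card_eq_sum_card_fiberwise (f := fun j : ZMod p => Quotient.mk S j)
    (s := univ) (t := univ) (fun _ _ => by simp)
  have hfib : ∀ q : Quotient S, #{j | Quotient.mk S j = q} = classSize S 0 := by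
    intro q
    induction q using Quotient.inductionOn with
    | h a =>
      rw [← hall a, classSize]
      congr 1
      ext j
      simp only [mem_filter, mem_univ, true_and]
      rw [Quotient.eq]
      exact ⟨S.symm, S.symm⟩
  simp only [hfib, sum_const, card_univ, ZMod.card, smul_eq_mul] at hsum
  rw [← Nat.card_eq_fintype_card] at hsum
  rcases (Nat.dvd_prime Fact.out).1 (Dvd.intro _ hsum.symm) with h | h
  · exact h1 h
  · exact h2 h

lemma classSize_comap (S : Setoid (ZMod p)) (j : ZMod p) :
    classSize (S.comap (· - 1)) j = classSize S (j - 1) := by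
  classical
  refine card_nbij' (· - 1) (· + 1) ?_ ?_ ?_ ?_ <;> intro i <;> simp [Setoid.comap_rel]

lemma smallestClasses_comap (S : Setoid (ZMod p)) :
    smallestClasses (S.comap (· - 1)) = (smallestClasses S).image (· + 1) := by
  classical
  ext j
  simp only [smallestClasses, mem_filter, mem_univ, true_and, mem_image, classSize_comap]
  constructor
  · exact fun h => ⟨j - 1, fun i => by simpa using h (i + 1), by ring⟩
  · rintro ⟨a, ha, rfl⟩ i
    simpa using ha (i - 1)

lemma card_quotient_comap (S : Setoid (ZMod p)) :
    Nat.card (Quotient (S.comap (· - 1))) = Nat.card (Quotient S) :=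
  Nat.card_congr (Quotient.congr (Equiv.subRight 1) (fun _ _ => Iff.rfl))

lemma setoid_eq_of_le_of_card {S T : Setoid (ZMod p)} (hle : ∀ a b, S a b → T a b)
    (hcard : Nat.card (Quotient S) = Nat.card (Quotient T)) : S = T := by
  have hsurj : Function.Surjective (Quotient.map' (s₁ := S) (s₂ := T) id hle) := by
    intro q
    induction q using Quotient.inductionOn with
    | h a => exact ⟨Quotient.mk S a, rfl⟩
  have hinj := (hsurj.bijective_of_nat_card_le hcard.le).injective
  ext a b
  exact ⟨hle a b, fun h => Quotient.exact (hinj (a₁ := Quotient.mk S a) (a₂ := Quotient.mk S b)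
    (Quotient.sound h))⟩

end Labels

/-! ### Configurations of `p` points -/

section Configurations

open Finset

lemma exists_nonempty_ne_univ_of_gap {ι : Type*} [Fintype ι] {f : ι → ℝ} {ε : ℝ} (hε : 0 < ε)
    {a b : ι} (hab : f b + (Fintype.card ι + 1) * ε ≤ f a) :
    ∃ U : Finset ι, U.Nonempty ∧ U ≠ univ ∧ ∀ a ∈ U, ∀ b ∉ U, f b + ε ≤ f a := by
  classical
  obtain ⟨k, hk, h⟩ := exists_gap f (u := fun k => f b + k * ε) (L := Fintype.card ι + 1)
    (fun m n hmn => by simp only; gcongr) (Nat.lt_succ_self _)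
  refine ⟨({j | f b + (k + 1 : ℕ) * ε ≤ f j} : Finset ι), ⟨a, ?_⟩, ?_, ?_⟩
  · have h1 : ((k + 1 : ℕ) : ℝ) * ε ≤ (Fintype.card ι + 1) * ε := by
      gcongr
      exact_mod_cast hk
    simp only [mem_filter, mem_univ, true_and]
    linarith
  · intro h
    have := h ▸ mem_univ b
    simp only [mem_filter, mem_univ, true_and] at this
    have : 0 < ((k + 1 : ℕ) : ℝ) * ε := by positivity
    linarith
  · intro a ha c hc
    simp only [mem_filter, mem_univ, true_and] at ha hc
    rcases h c with h | h
    · push_cast at ha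
      linarith
    · exact absurd h hc

/-- Points at distance less than `δ` are related, and all others are at distance at least `2δ`. -/
def IsClustering {ι X : Type*} [PseudoMetricSpace X] (x : ι → X) (δ : ℝ) (S : Setoid ι) : Prop :=
  ∀ a b, (S a b ∧ dist (x a) (x b) < δ) ∨ (¬ S a b ∧ 2 * δ ≤ dist (x a) (x b))

lemma exists_isClustering {ι X : Type*} [Fintype ι] [PseudoMetricSpace X] (x : ι → X) {δ : ℝ}
    (hδ : 0 < δ) {L : ℕ} (hL : Fintype.card ι * Fintype.card ι < L) :
    ∃ k < L, ∃ S, IsClustering x (δ * 2 ^ k) S := by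
  obtain ⟨k, hk, h⟩ := exists_gap (fun q : ι × ι => dist (x q.1) (x q.2))
    (u := fun k => δ * 2 ^ k)
    (fun m n hmn => by
      have : (2 : ℝ) ^ m ≤ 2 ^ n := pow_le_pow_right₀ one_le_two hmn
      simp only
      gcongr) (by rwa [Fintype.card_prod])
  have h' : ∀ a b, dist (x a) (x b) < δ * 2 ^ k ∨ 2 * (δ * 2 ^ k) ≤ dist (x a) (x b) := by
    intro a b
    refine (h (a, b)).imp_right fun h => ?_
    rw [pow_succ] at h
    linarith
  refine ⟨k, hk, ⟨fun a b => dist (x a) (x b) < δ * 2 ^ k,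
    fun a => by rw [dist_self]; positivity, fun {a b} h => by rwa [dist_comm],
    fun {a b c} h1 h2 => ?_⟩, fun a b => ?_⟩
  · refine (h' a c).resolve_right fun h3 => ?_
    linarith [dist_triangle (x a) (x b) (x c)]
  · rcases h' a b with h | h
    · exact Or.inl ⟨h, h⟩
    · refine Or.inr ⟨fun h1 : dist (x a) (x b) < δ * 2 ^ k => ?_, h⟩
      have : 0 < δ * 2 ^ k := by positivity
      linarith

lemma IsClustering.comp {ι κ X : Type*} [PseudoMetricSpace X] {x : ι → X} {δ : ℝ} {S : Setoid ι}
    (h : IsClustering x δ S) (g : κ → ι) : IsClustering (x ∘ g) δ (S.comap g) :=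
  fun a b => h (g a) (g b)

lemma IsClustering.rel_of_le {ι X : Type*} [PseudoMetricSpace X] {x y : ι → X} {δ δ' : ℝ}
    {S T : Setoid ι} (hS : IsClustering x δ S) (hT : IsClustering y δ' T) (hle : δ ≤ δ')
    (hd : ∀ a, 2 * dist (x a) (y a) < δ') {a b : ι} (h : S a b) : T a b := by
  have h1 := ((hS a b).resolve_right fun h' => h'.1 h).2
  by_contra h2
  have h3 := ((hT a b).resolve_left fun h' => h2 h'.1).2
  have h4 := dist_triangle4 (y a) (x a) (x b) (y b)
  rw [dist_comm (y a) (x a)] at h4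
  linarith [hd a, hd b]

variable {p d : ℕ} [Fact p.Prime]

lemma IsClustering.eq_of_card {X : Type*} [PseudoMetricSpace X] {x y : ZMod p → X} {δ δ' : ℝ}
    {S T : Setoid (ZMod p)} (hS : IsClustering x δ S) (hT : IsClustering y δ' T)
    (hd : ∀ a, 2 * dist (x a) (y a) < δ) (hd' : ∀ a, 2 * dist (x a) (y a) < δ')
    (hcard : Nat.card (Quotient S) = Nat.card (Quotient T)) : S = T := by
  rcases le_total δ δ' with h | h
  · exact setoid_eq_of_le_of_card (fun _ _ => hS.rel_of_le hT h hd') hcard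
  · exact (setoid_eq_of_le_of_card
      (fun _ _ => hT.rel_of_le hS h fun a => by rw [dist_comm]; exact hd a) hcard.symm).symm

/-- The cyclic shift of a configuration. -/
def rotate (x : ZMod p → Fin d → ℝ) : ZMod p → Fin d → ℝ := fun j => x (j - 1)

lemma rotate_iterate (m : ℕ) (x : ZMod p → Fin d → ℝ) : rotate^[m] x = fun j => x (j - m) := by
  induction m with
  | zero => simp
  | succ m ih =>
    rw [Function.iterate_succ_apply', ih]
    funext j
    simp only [rotate]
    congr 1
    push_cast
    ring

lemma rotate_iterate_prime : (rotate (p := p) (d := d))^[p] = id := by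
  funext x
  simp [rotate_iterate]

lemma isometry_rotate : Isometry (rotate (p := p) (d := d)) := by
  refine Isometry.of_dist_eq fun x y => le_antisymm ?_ ?_
  · exact (dist_pi_le_iff dist_nonneg).2 fun j => dist_le_pi_dist x y (j - 1)
  · refine (dist_pi_le_iff dist_nonneg).2 fun j => ?_
    simpa [rotate] using dist_le_pi_dist (rotate x) (rotate y) (j + 1)

/-- Nonnegative configurations of total mass one, in which the number of points with nonvanishing
`i`-th coordinate is bounded by `c i`. -/
def cappedSimplex (p : ℕ) [Fact p.Prime] {d : ℕ} (c : Fin d → ℕ) : Set (ZMod p → Fin d → ℝ) :=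
  {x | (∀ j i, 0 ≤ x j i) ∧ ∑ j, ∑ i, x j i = 1 ∧ ∀ i, #{j | x j i ≠ 0} ≤ c i}

lemma cappedSimplex_subset_Icc {c : Fin d → ℕ} : cappedSimplex p c ⊆ Set.Icc 0 1 := by
  rintro x ⟨h0, h1, -⟩
  refine ⟨fun j i => h0 j i, fun j i => ?_⟩
  rw [Pi.one_apply, Pi.one_apply, ← h1]
  exact (single_le_sum (fun i _ => h0 j i) (mem_univ i)).trans
    (single_le_sum (f := fun j => ∑ i, x j i) (fun j _ => sum_nonneg fun i _ => h0 j i)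
      (mem_univ j))

lemma dist_le_one_of_mem_Icc {x y : ZMod p → Fin d → ℝ} (hx : x ∈ Set.Icc 0 1)
    (hy : y ∈ Set.Icc 0 1) : dist x y ≤ 1 := by
  refine (dist_pi_le_iff zero_le_one).2 fun j => (dist_pi_le_iff zero_le_one).2 fun i => ?_
  have h1 := hx.1 j i
  have h2 := hx.2 j i
  have h3 := hy.1 j i
  have h4 := hy.2 j i
  simp only [Pi.zero_apply, Pi.one_apply] at h1 h2 h3 h4
  rw [Real.dist_eq, abs_le]
  constructor <;> linarith

lemma rotate_mem_cappedSimplex {c : Fin d → ℕ} {x : ZMod p → Fin d → ℝ}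
    (hx : x ∈ cappedSimplex p c) : rotate x ∈ cappedSimplex p c := by
  obtain ⟨h0, h1, h2⟩ := hx
  refine ⟨fun j i => h0 _ i, ?_, fun i => le_trans (le_of_eq ?_) (h2 i)⟩
  · rw [← h1]
    exact (Equiv.subRight (1 : ZMod p)).sum_comp fun j => ∑ i, x j i
  · exact card_equiv (Equiv.subRight 1) fun j => by simp only [mem_filter, mem_univ, true_and]; rfl

/-- The configuration with a single nonzero coordinate, in the point of index zero. -/
def unitConfig (p d m : ℕ) : ZMod p → Fin d → ℝ := fun j i => if j = 0 ∧ (i : ℕ) = m then 1 else 0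

lemma unitConfig_mem_cappedSimplex {c : Fin d → ℕ} {m : Fin d} (hc : 0 < c m) :
    unitConfig p d m ∈ cappedSimplex p c := by
  refine ⟨fun j i => ?_, ?_, fun i => ?_⟩
  · unfold unitConfig
    split_ifs <;> norm_num
  · rw [Fintype.sum_eq_single 0 fun j hj => by simp [unitConfig, hj],
      Fintype.sum_eq_single m fun i hi => by simp [unitConfig, Fin.val_inj, hi]]
    simp [unitConfig]
  · by_cases hi : i = m
    · subst hi
      refine le_trans (card_le_card (t := {0}) fun j => ?_) ((card_singleton _).trans_le hc)
      simp +contextual [unitConfig]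
    · simp [unitConfig, Fin.val_inj, hi]

lemma lineMap_mem_cappedSimplex {c c' : Fin d → ℕ} {m : Fin d} (hc : ∀ i, c i ≤ c' i)
    (hm : c m + 1 ≤ c' m) {x : ZMod p → Fin d → ℝ} (hx : x ∈ cappedSimplex p c) {t : ℝ}
    (ht : t ∈ Set.Icc (0 : ℝ) 1) :
    AffineMap.lineMap x (unitConfig p d m) t ∈ cappedSimplex p c' := by
  obtain ⟨h0, h1, h2⟩ := hx
  obtain ⟨e0, e1, -⟩ := unitConfig_mem_cappedSimplex (p := p) (c := c') (m := m) (by omega)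
  have hv : ∀ j i, AffineMap.lineMap x (unitConfig p d m) t j i =
      (1 - t) * x j i + t * unitConfig p d m j i := fun j i => by
    simp [AffineMap.lineMap_apply_module]
  refine ⟨fun j i => ?_, ?_, fun i => ?_⟩
  · rw [hv]
    exact add_nonneg (mul_nonneg (by linarith [ht.2]) (h0 j i)) (mul_nonneg ht.1 (e0 j i))
  · simp only [hv, sum_add_distrib, ← mul_sum, h1, e1]
    ring
  · by_cases hi : i = m
    · subst hi
      refine le_trans (card_le_card (t := insert 0 ({j | x j i ≠ 0} : Finset (ZMod p)))
        fun j => ?_) ((card_insert_le _ _).trans (by have := h2 i; omega))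
      simp only [mem_filter, mem_univ, true_and, mem_insert, hv]
      intro h
      by_contra! h'
      exact h (by simp [unitConfig, h'.1, h'.2])
    · refine le_trans (card_le_card fun j => ?_) ((h2 i).trans (hc i))
      simp only [mem_filter, mem_univ, true_and, hv]
      intro h h'
      exact h (by simp [unitConfig, Fin.val_inj, hi, h'])

/-- Nonnegative configurations of total mass one in which every coordinate vanishes somewhere. -/
def vanishingSimplex (p d : ℕ) [Fact p.Prime] : Set (ZMod p → Fin d → ℝ) :=
  {x | (∀ j i, 0 ≤ x j i) ∧ ∑ j, ∑ i, x j i = 1 ∧ ∀ i, ∃ j, x j i = 0}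

lemma cappedSimplex_subset_vanishingSimplex {c : Fin d → ℕ} (hc : ∀ i, c i < p) :
    cappedSimplex p c ⊆ vanishingSimplex p d := by
  rintro x ⟨h0, h1, h2⟩
  refine ⟨h0, h1, fun i => ?_⟩
  by_contra! h
  have := h2 i
  simp only [ne_eq, h, not_false_eq_true, filter_true, card_univ, ZMod.card] at this
  exact absurd (hc i) (by omega)

lemma isCompact_vanishingSimplex : IsCompact (vanishingSimplex p d) := by
  refine (isCompact_Icc (a := (0 : ZMod p → Fin d → ℝ)) (b := 1)).of_isClosed_subset ?_ ?_
  · have hev : ∀ j i, Continuous fun x : ZMod p → Fin d → ℝ => x j i := fun j i =>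
      (continuous_apply i).comp (continuous_apply j)
    have : vanishingSimplex p d = (⋂ j, ⋂ i, {x | 0 ≤ x j i}) ∩ ({x | ∑ j, ∑ i, x j i = 1} ∩
        ⋂ i, ⋃ j, {x | x j i = 0}) := by
      ext x
      simp [vanishingSimplex]
    rw [this]
    refine (isClosed_iInter fun j => isClosed_iInter fun i => ?_).inter (IsClosed.inter ?_ ?_)
    · exact isClosed_le continuous_const (hev j i)
    · exact isClosed_eq (by fun_prop) continuous_const
    · exact isClosed_iInter fun i => isClosed_iUnion_of_finite fun j =>
        isClosed_eq (hev j i) continuous_const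
  · rintro x ⟨h0, h1, -⟩
    exact cappedSimplex_subset_Icc (c := fun _ => p) ⟨h0, h1, fun i =>
      (card_le_univ _).trans (by simp)⟩

lemma exists_le_dist_of_mem_vanishingSimplex {x : ZMod p → Fin d → ℝ}
    (hx : x ∈ vanishingSimplex p d) : ∃ a b, ((p : ℝ) * d)⁻¹ ≤ dist (x a) (x b) := by
  obtain ⟨h0, h1, h2⟩ := hx
  by_contra! h
  have hd : 0 < d := by
    rcases Nat.eq_zero_or_pos d with rfl | h
    · simp at h1
    · exact h
  have hp : 0 < p := (Fact.out : p.Prime).pos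
  have hlt : ∀ j i, x j i < ((p : ℝ) * d)⁻¹ := by
    intro j i
    obtain ⟨j', hj'⟩ := h2 i
    have h3 := (dist_le_pi_dist (x j) (x j') i).trans_lt (h j j')
    rw [hj', Real.dist_eq, sub_zero] at h3
    exact (le_abs_self _).trans_lt h3
  have hne : Nonempty (Fin d) := ⟨⟨0, hd⟩⟩
  have : ∑ j : ZMod p, ∑ i : Fin d, x j i < ∑ _j : ZMod p, ∑ _i : Fin d, ((p : ℝ) * d)⁻¹ :=
    sum_lt_sum_of_nonempty univ_nonempty fun j _ =>
      sum_lt_sum_of_nonempty univ_nonempty fun i _ => hlt j i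
  rw [h1] at this
  simp only [sum_const, card_univ, ZMod.card, Fintype.card_fin, nsmul_eq_mul] at this
  have hpd : (p : ℝ) * d ≠ 0 := by positivity
  rw [← mul_assoc, mul_inv_cancel₀ hpd] at this
  exact lt_irrefl _ this

lemma card_quotient_lt {S : Setoid (ZMod p)} {a b : ZMod p} (hab : a ≠ b) (h : S a b) :
    Nat.card (Quotient S) < p := by
  have hle : Nat.card (Quotient S) ≤ Nat.card (ZMod p) :=
    Nat.card_le_card_of_surjective (Quotient.mk S) Quotient.mk_surjective
  rw [Nat.card_zmod] at hle
  refine lt_of_le_of_ne hle fun heq => hab ?_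
  have := (Quotient.mk_surjective (s := S)).bijective_of_nat_card_le
    (by rw [Nat.card_zmod, heq])
  exact this.injective (Quotient.sound h)

lemma one_lt_card_quotient {S : Setoid (ZMod p)} {a b : ZMod p} (h : ¬ S a b) :
    1 < Nat.card (Quotient S) := by
  rw [Finite.one_lt_card_iff_nontrivial]
  exact ⟨Quotient.mk S a, Quotient.mk S b, fun h' => h (Quotient.exact h')⟩

end Configurations

section Equalization

open Finset

variable {p d r : ℕ} [Fact p.Prime]

/-- The labels attached to a configuration: averages of superlevel sets of one of the functions,
and averages of unions of smallest clusters of points. -/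
def IsLabel (F : (ZMod p → Fin d → ℝ) → Fin r → ZMod p → ℝ) (ε δ : ℝ) (x : ZMod p → Fin d → ℝ) :
    Fin r × Fin (p - 1) ⊕ Fin (p - 2) → ZMod p → Prop
  | .inl (i, m), g => ∃ U : Finset (ZMod p), #U = m + 1 ∧ U ≠ univ ∧
      (∀ a ∈ U, ∀ b ∉ U, F x i b + ε ≤ F x i a) ∧ g = average U
  | .inr m, g => ∃ S : Setoid (ZMod p), ∃ k : ℕ, IsClustering x (δ * 2 ^ k) S ∧
      Nat.card (Quotient S) = m + 2 ∧ g = average (smallestClasses S)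

lemma IsLabel.rotate {F : (ZMod p → Fin d → ℝ) → Fin r → ZMod p → ℝ}
    (hF : ∀ x i a, F (rotate x) i a = F x i (a - 1)) {ε δ : ℝ} {x : ZMod p → Fin d → ℝ} :
    ∀ {c g}, IsLabel F ε δ x c g → IsLabel F ε δ (rotate x) c (g + 1)
  | .inl (i, m), g => by
    rintro ⟨U, hU, hne, hgap, rfl⟩
    have hU0 : U.Nonempty := card_pos.1 (by omega)
    have hcard : #(U.image (· + 1)) = #U := card_image_of_injective _ (add_left_injective 1)
    have hmem : ∀ a, a ∈ U.image (· + 1) ↔ a - 1 ∈ U := fun a =>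
      ⟨fun h => by
        obtain ⟨b, hb, rfl⟩ := mem_image.1 h
        simpa using hb, fun h => mem_image.2 ⟨_, h, by ring⟩⟩
    refine ⟨U.image (· + 1), hcard.trans hU, fun h => hne ?_, fun a ha b hb => ?_,
      (average_image_add_one hU0 hne).symm⟩
    · rw [← card_eq_iff_eq_univ, ← hcard, h, card_univ]
    · rw [hmem] at ha hb
      rw [hF, hF]
      exact hgap _ ha _ hb
  | .inr m, g => by
    rintro ⟨S, k, hS, hcard, rfl⟩
    have hm := m.2
    refine ⟨S.comap (· - 1), k, hS.comp _, (card_quotient_comap S).trans hcard, ?_⟩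
    rw [smallestClasses_comap, average_image_add_one (smallestClasses_nonempty S)
      (smallestClasses_ne_univ (by omega) (by omega))]

lemma IsLabel.eq_of_close {F : (ZMod p → Fin d → ℝ) → Fin r → ZMod p → ℝ} {ε δ : ℝ}
    {x y : ZMod p → Fin d → ℝ} (hF : ∀ i a, |F x i a - F y i a| < ε)
    (hd : ∀ a, 2 * dist (x a) (y a) < δ) :
    ∀ {c g g'}, IsLabel F ε δ x c g → IsLabel F ε δ y c g' → g = g'
  | .inl (i, m), g, g' => by
    rintro ⟨U, hU, -, hgap, rfl⟩ ⟨U', hU', -, hgap', rfl⟩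
    rw [eq_of_gap (hU.trans hU'.symm) hgap hgap' (hF i)]
  | .inr m, g, g' => by
    rintro ⟨S, k, hS, hcard, rfl⟩ ⟨S', k', hS', hcard', rfl⟩
    have hδ : 0 ≤ δ := le_trans (by positivity) (hd 0).le
    have hle : ∀ k : ℕ, δ ≤ δ * 2 ^ k := fun k => le_mul_of_one_le_right hδ (one_le_pow₀ one_le_two)
    rw [hS.eq_of_card hS' (fun a => (hd a).trans_le (hle k)) (fun a => (hd a).trans_le (hle k'))
      (hcard.trans hcard'.symm)]

lemma exists_isLabel_of_gap {F : (ZMod p → Fin d → ℝ) → Fin r → ZMod p → ℝ} {ε : ℝ} (δ : ℝ)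
    (hε : 0 < ε) {x : ZMod p → Fin d → ℝ} {i : Fin r} {a b : ZMod p}
    (h : F x i b + (p + 1) * ε ≤ F x i a) : ∃ c g, IsLabel F ε δ x c g := by
  obtain ⟨U, h0, h1, hU⟩ := exists_nonempty_ne_univ_of_gap hε
    (f := F x i) (a := a) (b := b) (by rwa [ZMod.card])
  have hlt : #U < p := by
    have := card_lt_univ_of_notMem (not_forall.1 fun h => h1 (eq_univ_iff_forall.2 h)).choose_spec
    rwa [ZMod.card] at this
  have hpos := h0.card_pos
  exact ⟨.inl (i, ⟨#U - 1, by omega⟩), _, U, by simp only; omega, h1, hU, rfl⟩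

lemma exists_isLabel_of_close (F : (ZMod p → Fin d → ℝ) → Fin r → ZMod p → ℝ) (ε : ℝ) {δ : ℝ}
    (hδ : 0 < δ) {x : ZMod p → Fin d → ℝ} {a b : ZMod p} (hab : a ≠ b)
    (h : dist (x a) (x b) < δ) {a' b' : ZMod p} (h' : δ * 2 ^ (p * p) ≤ dist (x a') (x b')) :
    ∃ c g, IsLabel F ε δ x c g := by
  obtain ⟨k, hk, S, hS⟩ := exists_isClustering x hδ (L := p * p + 1)
    (by rw [ZMod.card]; exact Nat.lt_succ_self _)
  have h1 : S a b := by
    refine ((hS a b).resolve_right fun h1 => ?_).1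
    have : δ ≤ δ * 2 ^ k := le_mul_of_one_le_right hδ.le (one_le_pow₀ one_le_two)
    linarith [h1.2]
  have h2 : ¬ S a' b' := by
    refine ((hS a' b').resolve_left fun h2 => ?_).1
    have : δ * 2 ^ k ≤ δ * 2 ^ (p * p) := by
      gcongr
      · exact one_le_two
      · omega
    linarith [h2.2]
  have h3 := card_quotient_lt hab h1
  have h4 := one_lt_card_quotient h2
  exact ⟨.inr ⟨Nat.card (Quotient S) - 2, by omega⟩, _, S, k, hS, by simp only; omega, rfl⟩

/-- If no injective configuration equalizes all functions, then on a compact set of configurations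
with separated points some function is not close to being constant. -/
lemma exists_uniform_gap {F : (ZMod p → Fin d → ℝ) → Fin r → ZMod p → ℝ} (hF : Continuous F)
    (hne : ∀ x : ZMod p → Fin d → ℝ, Function.Injective x → ∃ i a b, F x i a ≠ F x i b)
    {K : Set (ZMod p → Fin d → ℝ)} (hK : IsCompact K) {δ : ℝ} (hδ : 0 < δ) :
    ∃ ε > 0, ∀ x ∈ K, (∀ a b, a ≠ b → δ ≤ dist (x a) (x b)) →
      ∃ i a b, F x i b + ε ≤ F x i a := by
  have hFi : ∀ i a, Continuous fun x => F x i a := fun i a =>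
    (continuous_apply a).comp ((continuous_apply i).comp hF)
  have hclosed : IsClosed {x : ZMod p → Fin d → ℝ | ∀ a b, a ≠ b → δ ≤ dist (x a) (x b)} := by
    simp only [Set.ofPred_forall]
    exact isClosed_iInter fun a => isClosed_iInter fun b => isClosed_iInter fun _ =>
      isClosed_le continuous_const (by fun_prop)
  let G : (ZMod p → Fin d → ℝ) → Fin r × ZMod p × ZMod p → ℝ :=
    fun x q => F x q.1 q.2.1 - F x q.1 q.2.2
  have hG : Continuous G := continuous_pi fun q => (hFi _ _).sub (hFi _ _)
  obtain ⟨ε, hε, h⟩ := (hK.inter_right hclosed).exists_forall_le' (a := 0)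
    (f := fun x => ‖G x‖) hG.norm.continuousOn (fun x hx => norm_pos_iff.2 fun h0 => by
      obtain ⟨i, a, b, hab⟩ := hne x fun a b hab => by
        by_contra hab'
        have := hx.2 a b hab'
        rw [hab, dist_self] at this
        exact absurd hδ this.not_gt
      exact hab (sub_eq_zero.1 (congrFun h0 (i, a, b))))
  refine ⟨ε, hε, fun x hx hsep => ?_⟩
  by_contra! hlt
  refine absurd (h x ⟨hx, hsep⟩) (not_le.2 ((pi_norm_lt_iff hε).2 fun q => ?_))
  rw [Real.norm_eq_abs, abs_lt]
  constructor
  · linarith [hlt q.1 q.2.2 q.2.1]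
  · linarith [hlt q.1 q.2.1 q.2.2]

/-- Fewer than `d` equivariant families of `p` continuous functions on configurations of `p`
points in `ℝᵈ` can be made constant simultaneously by a configuration of distinct points. -/
theorem exists_injective_forall_eq (hodd : Odd p) (hdr : r < d)
    {F : (ZMod p → Fin d → ℝ) → Fin r → ZMod p → ℝ} (hF : Continuous F)
    (hrot : ∀ x i a, F (rotate x) i a = F x i (a - 1)) :
    ∃ x : ZMod p → Fin d → ℝ, Function.Injective x ∧ ∀ i a b, F x i a = F x i b := by
  by_contra! hne
  have hp : 2 < p := by
    have h2 := (Fact.out : p.Prime).two_le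
    rcases hodd with ⟨m, hm⟩
    omega
  have hd : 0 < d := by omega
  let δ : ℝ := ((p : ℝ) * d)⁻¹ / 2 ^ (p * p)
  have hδ : 0 < δ := by positivity
  obtain ⟨ε₀, hε₀, hgap⟩ := exists_uniform_gap hF hne
    (isCompact_vanishingSimplex (p := p) (d := d)) hδ
  let ε : ℝ := ε₀ / (p + 1)
  have hε : 0 < ε := by positivity
  have hpε : (p + 1) * ε = ε₀ := by simp only [ε]; field_simp
  have hex : ∀ x ∈ vanishingSimplex p d, ∃ c g, IsLabel F ε δ x c g := by
    intro x hx
    by_cases hsep : ∀ a b, a ≠ b → δ ≤ dist (x a) (x b)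
    · obtain ⟨i, a, b, h⟩ := hgap x hx hsep
      exact exists_isLabel_of_gap δ hε (by rwa [hpε])
    · push Not at hsep
      obtain ⟨a, b, hab, h⟩ := hsep
      obtain ⟨a', b', h'⟩ := exists_le_dist_of_mem_vanishingSimplex hx
      exact exists_isLabel_of_close F ε hδ hab h (a' := a') (b' := b')
        (by rwa [div_mul_cancel₀ _ (by positivity)])
  obtain ⟨η, hη, hunif⟩ := Metric.uniformContinuousOn_iff.1
    (isCompact_vanishingSimplex.uniformContinuousOn_of_continuous hF.continuousOn) ε hε
  let cap : ℕ → Fin d → ℕ := fun k i => min (p - 1) (k + 1 - i * (p - 1))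
  have hsub : ∀ k, cappedSimplex p (cap k) ⊆ vanishingSimplex p d := fun k =>
    cappedSimplex_subset_vanishingSimplex fun i => (min_le_left _ _).trans_lt (by omega)
  have hdiv : ∀ k ≤ r * (p - 1) + (p - 2), k / (p - 1) < d := by
    intro k hk
    have : k / (p - 1) < r + 1 := by
      rw [Nat.div_lt_iff_lt_mul (by omega), add_mul]
      omega
    omega
  have hmod : ∀ k, k / (p - 1) * (p - 1) + k % (p - 1) = k := fun k => Nat.div_add_mod' k (p - 1)
  have hmod' : ∀ k, k % (p - 1) < p - 1 := fun k => Nat.mod_lt _ (by omega)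
  have hunit : ∀ k ≤ r * (p - 1) + (p - 2),
      unitConfig p d (k / (p - 1)) ∈ cappedSimplex p (cap k) := by
    intro k hk
    refine unitConfig_mem_cappedSimplex (m := ⟨k / (p - 1), hdiv k hk⟩) (lt_min (by omega) ?_)
    have := hmod k
    simp only
    omega
  obtain ⟨x, hx, y, hy, hxy, c, g, g', hg, hg', hgg⟩ := exists_close_ne_label_of_relation
    (n := r * (p - 1) + (p - 2)) hodd rotate_iterate_prime (isometry_rotate (p := p) (d := d))
    (P := fun k => cappedSimplex p (cap k)) (w := fun k => unitConfig p d (k / (p - 1))) (D := 1)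
    (fun k _ x hx => rotate_mem_cappedSimplex hx) hunit
    (fun k hk x hx t ht => lineMap_mem_cappedSimplex (m := ⟨(k + 1) / (p - 1), hdiv _ hk⟩)
      (fun i => min_le_min_left _ (by omega)) (by
        have h1 := hmod (k + 1)
        have h2 := hmod' (k + 1)
        simp only
        omega) hx ht)
    (fun k hk x hx => dist_le_one_of_mem_Icc (cappedSimplex_subset_Icc hx)
      (cappedSimplex_subset_Icc (hunit (k + 1) hk)))
    (by simp) (valid := IsLabel F ε δ) (fun x hx => hex x (hsub _ hx))
    (fun x c g h => h.rotate hrot) (η := min η (δ / 2)) (by positivity)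
  have hclose := hunif x (hsub _ hx) y (hsub _ hy) (hxy.trans_le (min_le_left _ _))
  refine hgg (hg.eq_of_close (fun i a => ?_) (fun a => ?_) hg')
  · exact ((dist_le_pi_dist (F x i) (F y i) a).trans (dist_le_pi_dist (F x) (F y) i)).trans_lt
      hclose
  · have := (dist_le_pi_dist x y a).trans_lt (hxy.trans_le (min_le_right _ _))
    linarith

end Equalization

/-- Remark (generalization of Theorem 2): for `d > r` and symmetric continuous maps
`ρᵢ : ℝᵈ × ℝᵈ → ℝ`, there are `p` distinct points and constants `cᵢ ∈ ℝ` such that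
each `p`-gon `C_{tᵢ}` has all its `ρᵢ`-edge-values equal to `cᵢ`. -/
theorem exists_pgons_symmetric_continuous
    (p d r : ℕ) (hp : p.Prime) (hodd : Odd p) (hd : 0 < d) (hr : 0 < r) (hdr : d > r)
    (ρ : Fin r → EuclideanSpace ℝ (Fin d) → EuclideanSpace ℝ (Fin d) → ℝ)
    (hsymm : ∀ i, ∀ x y, ρ i x y = ρ i y x)
    (hcont : ∀ i, Continuous fun q : EuclideanSpace ℝ (Fin d) × EuclideanSpace ℝ (Fin d) =>
      ρ i q.1 q.2)
    (t : Fin r → ℕ) (ht : ∀ i, 1 ≤ t i ∧ t i ≤ (p - 1) / 2) :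
    ∃ x : ZMod p → EuclideanSpace ℝ (Fin d), ∃ c : Fin r → ℝ,
      Function.Injective x ∧
      ∀ i : Fin r, ∀ k : ZMod p,
        ρ i (x (k * (t i : ZMod p))) (x ((k + 1) * (t i : ZMod p))) = c i := by
  have : Fact p.Prime := ⟨hp⟩
  have hpoint : ∀ j : ZMod p, Continuous fun x : ZMod p → Fin d → ℝ =>
      (WithLp.toLp 2 (x j) : EuclideanSpace ℝ (Fin d)) := fun j =>
    (PiLp.continuous_toLp 2 _).comp (continuous_apply j)
  obtain ⟨x, hx, heq⟩ := exists_injective_forall_eq hodd hdr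
    (F := fun x i j => ρ i (WithLp.toLp 2 (x j)) (WithLp.toLp 2 (x (j + t i))))
    (continuous_pi fun i => continuous_pi fun j =>
      (hcont i).comp ((hpoint j).prodMk (hpoint (j + t i))))
    (fun x i a => by simp only [rotate]; rw [add_sub_right_comm])
  refine ⟨fun j => WithLp.toLp 2 (x j), fun i => ρ i (WithLp.toLp 2 (x 0))
    (WithLp.toLp 2 (x (0 + t i))), (WithLp.toLp_injective 2).comp hx, fun i k => ?_⟩
  rw [add_mul, one_mul]
  exact heq i (k * t i) 0
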